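/- Let L be a vector sublattice of ℝ^Ω containing 1 and φ a positive linear functional on L. Then lim_n φ(f_n) = 0 for every sequence (f_n) in L decreasing pointwise to 0, if and only if φ admits a representing measure m (φ(f) = φ(1)m(f) for f ∈ L, L ⊆ L(m), m a finitely additive probability when φ(1)=1) whose restriction to the σ-algebra generated by L is countably additive. -/

import Mathlib

open Filter Set

/-- A positive finitely additive set function on `2^Ω`. -/
structure FinAddMeasure (Ω : Type*) where
  μ : Set Ω → ℝ
  nonneg : ∀ E, 0 ≤ μ E
  empty : μ ∅ = 0
  add : ∀ E F : Set Ω, Disjoint E F → μ (E ∪ F) = μ E + μ F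

/-- A finitely additive probability on `2^Ω`. -/
structure FinAddProb (Ω : Type*) extends FinAddMeasure Ω where
  total : μ Set.univ = 1

/-- Lower (simple-function) sums for `f` relative to a set function `μ` defined
on the sets of the family `A`: sums `∑ aᵢ μ(Eᵢ)` with `aᵢ ≥ 0`, `Eᵢ ∈ A` and
`∑ aᵢ 1_{Eᵢ} ≤ f` pointwise. -/
def lowerSums {Ω : Type*} (A : Set (Set Ω)) (μ : Set Ω → ℝ) (f : Ω → ℝ) : Set ℝ :=
  { r | ∃ (n : ℕ) (a : Fin n → ℝ) (E : Fin n → Set Ω),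
      (∀ i, 0 ≤ a i) ∧ (∀ i, E i ∈ A) ∧
      (∀ ω, (∑ i, a i * (E i).indicator (fun _ => (1 : ℝ)) ω) ≤ f ω) ∧
      r = ∑ i, a i * μ (E i) }

/-- `f` is integrable with respect to `μ` (restricted to the family `A`):
the lower sums of the positive and of the negative part are bounded above. -/
def FAIntegrableOn {Ω : Type*} (A : Set (Set Ω)) (μ : Set Ω → ℝ) (f : Ω → ℝ) : Prop :=
  BddAbove (lowerSums A μ (fun ω => max (f ω) 0)) ∧
  BddAbove (lowerSums A μ (fun ω => max (-(f ω)) 0))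

/-- The finitely additive integral `μ(f) = μ(f⁺) - μ(f⁻)` obtained from lower sums. -/
noncomputable def faIntOn {Ω : Type*} (A : Set (Set Ω)) (μ : Set Ω → ℝ) (f : Ω → ℝ) : ℝ :=
  sSup (lowerSums A μ (fun ω => max (f ω) 0)) -
    sSup (lowerSums A μ (fun ω => max (-(f ω)) 0))

/-- Integrability with respect to a finitely additive measure on all of `2^Ω`. -/
def FAIntegrable {Ω : Type*} (m : FinAddMeasure Ω) (f : Ω → ℝ) : Prop :=
  FAIntegrableOn Set.univ m.μ f

/-- The integral with respect to a finitely additive measure on all of `2^Ω`. -/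
noncomputable def faInt {Ω : Type*} (m : FinAddMeasure Ω) (f : Ω → ℝ) : ℝ :=
  faIntOn Set.univ m.μ f

/-!
Covering a function `g ≥ 0` by increasing sequences from `L` gives Daniell's upper integral, which
is countably subadditive, so on indicators it is an outer measure. If `f ≥ 0` lies in `L`, then
`(n • f) ⊓ 1` increases to the indicator of `{0 < f}`, and the identity `a = a ⊓ b + (a - b)⁺`
makes this set Carathéodory measurable; hence so is all of `σ(L)`. Daniell's condition says
exactly that `φ` is a lower bound for the upper integral on `L`. Integration against the outer
measure is in turn an upper bound for it, and on bounded `f` equality follows by comparing `f`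
with `n - f`, because the total mass is at most `φ 1`.

The Riesz extension theorem, applied to bounded functions, extends the resulting measure to a
finitely additive measure on all subsets. Passing to arbitrary sets does not enlarge the lower
sums of a measurable `g`: rounding `g` down to the finitely many values of a step function `s ≤ g`
yields a measurable step function between `s` and `g`. So the finitely additive integral of a
measurable function is its Lebesgue integral, and the converse is dominated convergence.
-/

open MeasureTheory Topology
open scoped ENNReal NNReal

/-- A vector sublattice of `ℝ^Ω` containing the constants, as a mixin on its underlying subspace. -/
class IsUnitalSublattice {Ω : Type*} (L : Submodule ℝ (Ω → ℝ)) : Prop where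
  supClosed : SupClosed (L : Set (Ω → ℝ))
  one_mem : 1 ∈ L

namespace IsUnitalSublattice

variable {Ω : Type*} {L : Submodule ℝ (Ω → ℝ)} [IsUnitalSublattice L]

theorem inf_mem {f g : Ω → ℝ} (hf : f ∈ L) (hg : g ∈ L) : f ⊓ g ∈ L := by
  rw [← neg_neg (f ⊓ g), neg_inf]
  exact L.neg_mem (supClosed (L.neg_mem hf) (L.neg_mem hg))

instance : Lattice L :=
  Subtype.lattice (fun _ _ hf hg => supClosed hf hg) (fun _ _ hf hg => inf_mem hf hg)

instance : One L := ⟨⟨1, one_mem⟩⟩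

instance : ZeroLEOneClass L := ⟨fun _ => zero_le_one⟩

theorem coe_inf (f g : L) (ω : Ω) : (f ⊓ g).1 ω = min (f.1 ω) (g.1 ω) := rfl

theorem coe_posPart (f : L) (ω : Ω) : (f⁺).1 ω = max (f.1 ω) 0 := rfl

theorem coe_one (ω : Ω) : (1 : L).1 ω = 1 := rfl

end IsUnitalSublattice

section UpperIntegral

variable {Ω : Type*} {L : Submodule ℝ (Ω → ℝ)}

/-- An increasing sequence of nonnegative elements of `L` whose supremum dominates `g`. -/
structure IsUpperCover (F : ℕ → L) (g : Ω → ℝ≥0∞) : Prop where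
  mono : Monotone F
  nonneg : ∀ n, 0 ≤ F n
  le_iSup : ∀ ω, g ω ≤ ⨆ n, ENNReal.ofReal ((F n).1 ω)

/-- The Daniell upper integral of a function with values in `[0, ∞]`. -/
noncomputable def upperIntegral (φ : L →ₚ[ℝ] ℝ) (g : Ω → ℝ≥0∞) : ℝ≥0∞ :=
  ⨅ (F : ℕ → L) (_ : IsUpperCover F g), ⨆ n, ENNReal.ofReal (φ (F n))

theorem monotone_ofReal_apply {F : ℕ → L} (hF : Monotone F) (ω : Ω) :
    Monotone fun n => ENNReal.ofReal ((F n).1 ω) :=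
  fun _ _ hnk => ENNReal.ofReal_le_ofReal (hF hnk ω)

namespace IsUpperCover

theorem const {f : L} (hf : 0 ≤ f) :
    IsUpperCover (fun _ => f) fun ω => ENNReal.ofReal (f.1 ω) :=
  ⟨monotone_const, fun _ => hf, fun _ => le_iSup_of_le 0 le_rfl⟩

theorem anti {F : ℕ → L} {g g' : Ω → ℝ≥0∞} (hF : IsUpperCover F g) (hg : g' ≤ g) :
    IsUpperCover F g' :=
  ⟨hF.mono, hF.nonneg, fun ω => (hg ω).trans (hF.le_iSup ω)⟩

theorem smul {F : ℕ → L} {g : Ω → ℝ≥0∞} (hF : IsUpperCover F g) (c : ℝ≥0) :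
    IsUpperCover (fun n => (c : ℝ) • F n) fun ω => c * g ω where
  mono n k hnk ω := mul_le_mul_of_nonneg_left (hF.mono hnk ω) c.2
  nonneg n ω := mul_nonneg c.2 (hF.nonneg n ω)
  le_iSup ω := by
    simp only [Submodule.coe_smul, Pi.smul_apply, smul_eq_mul, ENNReal.ofReal_mul c.coe_nonneg,
      ENNReal.ofReal_coe_nnreal, ← ENNReal.mul_iSup]
    gcongr
    exact hF.le_iSup ω

theorem add {F G : ℕ → L} {g k : Ω → ℝ≥0∞} (hF : IsUpperCover F g) (hG : IsUpperCover G k) :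
    IsUpperCover (F + G) (g + k) where
  mono := hF.mono.add hG.mono
  nonneg n := add_nonneg (hF.nonneg n) (hG.nonneg n)
  le_iSup ω := by
    have hsum n : ENNReal.ofReal (((F + G) n).1 ω) =
        ENNReal.ofReal ((F n).1 ω) + ENNReal.ofReal ((G n).1 ω) :=
      ENNReal.ofReal_add (hF.nonneg n ω) (hG.nonneg n ω)
    rw [iSup_congr hsum, ← ENNReal.iSup_add_iSup_of_monotone
      (monotone_ofReal_apply hF.mono ω) (monotone_ofReal_apply hG.mono ω)]
    exact add_le_add (hF.le_iSup ω) (hG.le_iSup ω)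

theorem sum_le_sum_range {F : ℕ → ℕ → L} {g : ℕ → Ω → ℝ≥0∞} (hF : ∀ i, IsUpperCover (F i) (g i))
    {m m' n n' : ℕ} (hm : m ≤ m') (hn : n ≤ n') :
    ∑ i ∈ Finset.range m, F i n ≤ ∑ i ∈ Finset.range m', F i n' :=
  (Finset.sum_le_sum fun i _ => (hF i).mono hn).trans <|
    Finset.sum_le_sum_of_subset_of_nonneg (Finset.range_mono hm) fun i _ _ => (hF i).nonneg n'

theorem diagonal_sum {F : ℕ → ℕ → L} {g : ℕ → Ω → ℝ≥0∞} (hF : ∀ i, IsUpperCover (F i) (g i)) :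
    IsUpperCover (fun n => ∑ i ∈ Finset.range n, F i n) fun ω => ∑' i, g i ω where
  mono n k hnk := sum_le_sum_range hF hnk hnk
  nonneg n := Finset.sum_nonneg fun i _ => (hF i).nonneg n
  le_iSup ω := by
    have hsum m n : ∑ i ∈ Finset.range m, ENNReal.ofReal ((F i n).1 ω) =
        ENNReal.ofReal ((∑ i ∈ Finset.range m, F i n : L).1 ω) := by
      rw [← ENNReal.ofReal_sum_of_nonneg fun i _ => (hF i).nonneg n ω,
        AddSubmonoidClass.coe_finsetSum, Finset.sum_apply]
    rw [ENNReal.tsum_eq_iSup_nat]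
    refine iSup_le fun m => ?_
    calc ∑ i ∈ Finset.range m, g i ω
        ≤ ∑ i ∈ Finset.range m, ⨆ n, ENNReal.ofReal ((F i n).1 ω) :=
          Finset.sum_le_sum fun i _ => (hF i).le_iSup ω
      _ = ⨆ n, ENNReal.ofReal ((∑ i ∈ Finset.range m, F i n : L).1 ω) := by
          rw [ENNReal.finsetSum_iSup_of_monotone fun i => monotone_ofReal_apply (hF i).mono ω]
          exact iSup_congr (hsum m)
      _ ≤ ⨆ n, ENNReal.ofReal ((∑ i ∈ Finset.range n, F i n : L).1 ω) :=
          iSup_le fun n => le_iSup_of_le (max m n) <| ENNReal.ofReal_le_ofReal <|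
            sum_le_sum_range hF (le_max_left m n) (le_max_right m n) ω

end IsUpperCover

variable (φ : L →ₚ[ℝ] ℝ)

theorem upperIntegral_le_iSup {F : ℕ → L} {g : Ω → ℝ≥0∞} (hF : IsUpperCover F g) :
    upperIntegral φ g ≤ ⨆ n, ENNReal.ofReal (φ (F n)) :=
  iInf₂_le F hF

theorem upperIntegral_ofReal_le {f : L} (hf : 0 ≤ f) :
    upperIntegral φ (fun ω => ENNReal.ofReal (f.1 ω)) ≤ ENNReal.ofReal (φ f) :=
  (upperIntegral_le_iSup φ (.const hf)).trans_eq ciSup_const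

theorem upperIntegral_zero : upperIntegral φ (fun _ => 0) = 0 := by
  simpa using upperIntegral_ofReal_le φ (le_refl (0 : L))

theorem upperIntegral_mono : Monotone (upperIntegral φ) :=
  fun _ _ hg => le_iInf₂ fun _ hF => upperIntegral_le_iSup φ (hF.anti hg)

theorem upperIntegral_smul_le (c : ℝ≥0) (g : Ω → ℝ≥0∞) :
    upperIntegral φ (fun ω => c * g ω) ≤ c * upperIntegral φ g := by
  rcases eq_or_ne c 0 with rfl | hc
  · simp [upperIntegral_zero]
  have hc' : (c : ℝ≥0∞) ≠ 0 := ENNReal.coe_ne_zero.2 hc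
  simp only [upperIntegral, ENNReal.mul_iInf_of_ne hc' ENNReal.coe_ne_top, ENNReal.mul_iSup]
  refine le_iInf₂ fun F hF => (upperIntegral_le_iSup φ (hF.smul c)).trans_eq ?_
  simp only [map_smul, smul_eq_mul, ENNReal.ofReal_mul c.coe_nonneg, ENNReal.ofReal_coe_nnreal]

theorem upperIntegral_add_le (g k : Ω → ℝ≥0∞) :
    upperIntegral φ (g + k) ≤ upperIntegral φ g + upperIntegral φ k := by
  rw [upperIntegral.eq_def φ g, upperIntegral.eq_def φ k]
  simp only [ENNReal.iInf_add, ENNReal.add_iInf]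
  refine le_iInf₂ fun G hG => le_iInf₂ fun F hF =>
    (upperIntegral_le_iSup φ (hF.add hG)).trans (iSup_le fun n => ?_)
  rw [Pi.add_apply, map_add, ENNReal.ofReal_add (φ.map_nonneg (hF.nonneg n))
    (φ.map_nonneg (hG.nonneg n))]
  exact add_le_add (le_iSup (fun n => ENNReal.ofReal (φ (F n))) n)
    (le_iSup (fun n => ENNReal.ofReal (φ (G n))) n)

theorem upperIntegral_tsum_le (g : ℕ → Ω → ℝ≥0∞) :
    upperIntegral φ (fun ω => ∑' i, g i ω) ≤ ∑' i, upperIntegral φ (g i) := by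
  refine ENNReal.le_of_forall_pos_le_add fun ε hε hfin => ?_
  obtain ⟨δ, hδ, hδε⟩ := ENNReal.exists_pos_sum_of_countable (ENNReal.coe_pos.2 hε).ne' ℕ
  have hcover i : ∃ F, IsUpperCover F (g i) ∧
      ⨆ n, ENNReal.ofReal (φ (F n)) < upperIntegral φ (g i) + δ i := by
    have hlt : upperIntegral φ (g i) < upperIntegral φ (g i) + δ i :=
      ENNReal.lt_add_right (ENNReal.ne_top_of_tsum_ne_top hfin.ne i) (ENNReal.coe_pos.2 (hδ i)).ne'
    simpa only [upperIntegral, iInf_lt_iff, exists_prop] using hlt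
  choose F hF hFlt using hcover
  refine (upperIntegral_le_iSup φ (IsUpperCover.diagonal_sum hF)).trans (iSup_le fun n => ?_)
  calc ENNReal.ofReal (φ (∑ i ∈ Finset.range n, F i n))
      = ∑ i ∈ Finset.range n, ENNReal.ofReal (φ (F i n)) := by
        rw [map_sum, ENNReal.ofReal_sum_of_nonneg fun i _ => φ.map_nonneg ((hF i).nonneg n)]
    _ ≤ ∑ i ∈ Finset.range n, (upperIntegral φ (g i) + δ i) :=
        Finset.sum_le_sum fun i _ =>
          (le_iSup (fun n => ENNReal.ofReal (φ (F i n))) n).trans (hFlt i).le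
    _ ≤ ∑' i, (upperIntegral φ (g i) + δ i) := ENNReal.sum_le_tsum _
    _ = ∑' i, upperIntegral φ (g i) + ∑' i, (δ i : ℝ≥0∞) := ENNReal.tsum_add
    _ ≤ ∑' i, upperIntegral φ (g i) + ε := by gcongr

/-- The Daniell outer measure: the upper integral of indicator functions. -/
noncomputable def upperOuterMeasure : OuterMeasure Ω where
  measureOf A := upperIntegral φ (A.indicator 1)
  empty := by simpa only [indicator_empty] using upperIntegral_zero φ
  mono hAB := upperIntegral_mono φ (indicator_le_indicator_of_subset hAB fun _ => zero_le)
  iUnion_nat A _ := by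
    refine (upperIntegral_mono φ fun ω => ?_).trans (upperIntegral_tsum_le φ _)
    by_cases hω : ω ∈ ⋃ i, A i
    · obtain ⟨i, hi⟩ := mem_iUnion.1 hω
      calc (⋃ i, A i).indicator (1 : Ω → ℝ≥0∞) ω
          = (A i).indicator 1 ω := by rw [indicator_of_mem hω, indicator_of_mem hi]
        _ ≤ ∑' i, (A i).indicator 1 ω := ENNReal.le_tsum i
    · exact (indicator_of_notMem hω _).trans_le zero_le

theorem upperOuterMeasure_apply (A : Set Ω) :
    upperOuterMeasure φ A = upperIntegral φ (A.indicator 1) :=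
  rfl

end UpperIntegral

section Caratheodory

variable {Ω : Type*} {L : Submodule ℝ (Ω → ℝ)} [IsUnitalSublattice L]

namespace IsUpperCover

theorem inf {F u : ℕ → L} {g : Ω → ℝ≥0∞} (hF : IsUpperCover F g) (hu : Monotone u)
    (hu0 : ∀ n, 0 ≤ u n) :
    IsUpperCover (fun n => F n ⊓ u n) fun ω => g ω ⊓ ⨆ n, ENNReal.ofReal ((u n).1 ω) where
  mono := hF.mono.inf hu
  nonneg n := le_inf (hF.nonneg n) (hu0 n)
  le_iSup ω := by
    simp only [IsUnitalSublattice.coe_inf, ENNReal.ofReal_min]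
    rw [iSup_inf_of_monotone (monotone_ofReal_apply hF.mono ω) (monotone_ofReal_apply hu ω)]
    exact inf_le_inf_right _ (hF.le_iSup ω)

theorem posPart_sub {F : ℕ → L} {g : Ω → ℝ≥0∞} (hF : IsUpperCover F g) {f : L} (hf : 0 ≤ f) :
    IsUpperCover (fun n => (F n - f)⁺) fun ω => g ω - ENNReal.ofReal (f.1 ω) where
  mono n k hnk := posPart_mono (sub_le_sub_right (hF.mono hnk) f)
  nonneg n := posPart_nonneg _
  le_iSup ω := by
    have hsub n : ENNReal.ofReal (((F n - f)⁺).1 ω) =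
        ENNReal.ofReal ((F n).1 ω) - ENNReal.ofReal (f.1 ω) := by
      rw [← ENNReal.ofReal_sub _ (hf ω)]
      exact (ENNReal.ofReal_max _ _).trans (by simp)
    rw [iSup_congr hsub, ← ENNReal.iSup_sub]
    exact tsub_le_tsub_right (hF.le_iSup ω) _

end IsUpperCover

variable (φ : L →ₚ[ℝ] ℝ)

theorem map_inf_add_map_posPart_sub_le {F : ℕ → L} (hF : Monotone F) (u : L) (n k : ℕ) :
    φ (F k ⊓ u) + φ ((F n - u)⁺) ≤ φ (F (max k n)) := by
  rw [← map_add]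
  refine OrderHomClass.mono φ ?_
  calc F k ⊓ u + (F n - u)⁺
      ≤ F (max k n) ⊓ u + (F (max k n) - u)⁺ := by
        gcongr
        · exact hF (le_max_left k n)
        · exact posPart_mono (sub_le_sub_right (hF (le_max_right k n)) u)
    _ = F (max k n) := by rw [inf_eq_sub_posPart_sub, sub_add_cancel]

theorem upperIntegral_inf_add_sub_le (g : Ω → ℝ≥0∞) {u : ℕ → L} (hu : Monotone u)
    (hu0 : ∀ n, 0 ≤ u n) :
    upperIntegral φ (fun ω => g ω ⊓ ⨆ n, ENNReal.ofReal ((u n).1 ω)) +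
      upperIntegral φ (fun ω => g ω - ⨆ n, ENNReal.ofReal ((u n).1 ω)) ≤ upperIntegral φ g := by
  refine le_iInf₂ fun F hF => ?_
  refine (add_le_add_left (upperIntegral_le_iSup φ (hF.inf hu hu0)) _).trans ?_
  rw [ENNReal.iSup_add]
  refine iSup_le fun k => ?_
  have hsub : IsUpperCover (fun n => (F n - u k)⁺)
      fun ω => g ω - ⨆ n, ENNReal.ofReal ((u n).1 ω) :=
    (hF.posPart_sub (hu0 k)).anti fun ω =>
      tsub_le_tsub_left (le_iSup (fun n => ENNReal.ofReal ((u n).1 ω)) k) _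
  refine (add_le_add_right (upperIntegral_le_iSup φ hsub) _).trans ?_
  rw [ENNReal.add_iSup]
  refine iSup_le fun n => le_iSup_of_le (max k n) ?_
  rw [← ENNReal.ofReal_add (φ.map_nonneg (le_inf (hF.nonneg k) (hu0 k)))
    (φ.map_nonneg (posPart_nonneg _))]
  exact ENNReal.ofReal_le_ofReal (map_inf_add_map_posPart_sub_le φ hF.mono (u k) n k)

theorem iSup_ofReal_nsmul_inf_one {f : L} (hf : 0 ≤ f) (ω : Ω) :
    ⨆ n : ℕ, ENNReal.ofReal ((n • f ⊓ 1).1 ω) = {ω | 0 < f.1 ω}.indicator 1 ω := by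
  have hcoe (n : ℕ) : (n • f ⊓ 1).1 ω = min (n * f.1 ω) 1 := by
    rw [← nsmul_eq_mul]
    rfl
  simp only [hcoe]
  rcases (hf ω).eq_or_lt' with h | h
  · have h : f.1 ω = 0 := h
    simp [h]
  · rw [indicator_of_mem (by exact h), Pi.one_apply]
    refine le_antisymm (iSup_le fun n => ?_) ?_
    · exact (ENNReal.ofReal_le_ofReal (min_le_right _ _)).trans_eq ENNReal.ofReal_one
    · obtain ⟨n, hn⟩ := exists_nat_ge (f.1 ω)⁻¹
      refine le_iSup_of_le n ?_
      rw [min_eq_right ((inv_le_iff_one_le_mul₀ h).1 hn), ENNReal.ofReal_one]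

theorem isCaratheodory_setOf_pos {f : L} (hf : 0 ≤ f) :
    (upperOuterMeasure φ).IsCaratheodory {ω | 0 < f.1 ω} := by
  refine (OuterMeasure.isCaratheodory_iff_le _).2 fun T => ?_
  have hmono : Monotone fun n : ℕ => n • f ⊓ 1 := fun n k hnk =>
    inf_le_inf_right 1 (nsmul_le_nsmul_left hf hnk)
  have hnonneg (n : ℕ) : 0 ≤ n • f ⊓ 1 := le_inf (nsmul_nonneg hf n) zero_le_one
  refine le_of_eq_of_le ?_ (upperIntegral_inf_add_sub_le φ (T.indicator 1) hmono hnonneg)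
  simp only [iSup_ofReal_nsmul_inf_one hf, upperOuterMeasure_apply]
  congr 2 <;> funext ω <;> by_cases hT : ω ∈ T <;> by_cases hω : 0 < f.1 ω <;> simp [hT, hω]

theorem isCaratheodory_setOf_lt (f : L) (c : ℝ) :
    (upperOuterMeasure φ).IsCaratheodory {ω | c < f.1 ω} := by
  have hset : {ω | c < f.1 ω} = {ω | 0 < ((f - c • 1)⁺).1 ω} := by
    ext ω
    simp [IsUnitalSublattice.coe_posPart, IsUnitalSublattice.coe_one]
  exact hset ▸ isCaratheodory_setOf_pos φ (posPart_nonneg _)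

theorem iSup_comap_le_caratheodory :
    ⨆ f ∈ L, MeasurableSpace.comap f Real.measurableSpace ≤
      (upperOuterMeasure φ).caratheodory := by
  let _ := (upperOuterMeasure φ).caratheodory
  exact iSup₂_le fun f hf =>
    (measurable_of_Ioi (f := f) fun c => isCaratheodory_setOf_lt φ ⟨f, hf⟩ c).comap_le

end Caratheodory

section Lintegral

variable {Ω : Type*} {L : Submodule ℝ (Ω → ℝ)} {φ : L →ₚ[ℝ] ℝ} [mΩ : MeasurableSpace Ω]

theorem upperIntegral_simpleFunc_le (hm : mΩ ≤ (upperOuterMeasure φ).caratheodory)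
    (s : SimpleFunc Ω ℝ≥0) :
    upperIntegral φ (fun ω => s ω) ≤ ∫⁻ ω, s ω ∂(upperOuterMeasure φ).toMeasure hm := by
  induction s using SimpleFunc.induction with
  | @const c A hA =>
    have hpiece ω : ((SimpleFunc.piecewise A hA (.const Ω c) (.const Ω 0) ω : ℝ≥0) : ℝ≥0∞) =
        c * A.indicator 1 ω := by
      by_cases hω : ω ∈ A <;> simp [hω]
    simp only [hpiece]
    rw [lintegral_const_mul c (measurable_one.indicator hA), lintegral_indicator_one hA,
      toMeasure_apply _ hm hA]
    exact upperIntegral_smul_le φ c _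
  | add _ hs ht =>
    simp only [SimpleFunc.add_apply, ENNReal.coe_add]
    rw [lintegral_add_left (by fun_prop)]
    exact (upperIntegral_add_le φ _ _).trans (add_le_add hs ht)

theorem upperIntegral_le_lintegral (hm : mΩ ≤ (upperOuterMeasure φ).caratheodory)
    {g : Ω → ℝ≥0∞} (hg : Measurable g) :
    upperIntegral φ g ≤ ∫⁻ ω, g ω ∂(upperOuterMeasure φ).toMeasure hm := by
  have hsum ω : ∑' n, (SimpleFunc.eapproxDiff g n ω : ℝ≥0∞) = g ω :=
    SimpleFunc.tsum_eapproxDiff g hg ω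
  calc upperIntegral φ g
      = upperIntegral φ fun ω => ∑' n, (SimpleFunc.eapproxDiff g n ω : ℝ≥0∞) := by
        simp only [hsum]
    _ ≤ ∑' n, upperIntegral φ fun ω => SimpleFunc.eapproxDiff g n ω := upperIntegral_tsum_le φ _
    _ ≤ ∑' n, ∫⁻ ω, SimpleFunc.eapproxDiff g n ω ∂(upperOuterMeasure φ).toMeasure hm :=
        ENNReal.tsum_le_tsum fun n => upperIntegral_simpleFunc_le hm _
    _ = ∫⁻ ω, g ω ∂(upperOuterMeasure φ).toMeasure hm := by
        rw [← lintegral_tsum fun n => by fun_prop]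
        simp only [hsum]

theorem measurable_of_eq_iSup_comap
    (hL : mΩ = ⨆ f ∈ L, MeasurableSpace.comap f Real.measurableSpace) {f : Ω → ℝ} (hf : f ∈ L) :
    Measurable f :=
  measurable_iff_comap_le.2 (hL ▸ le_iSup₂_of_le f hf le_rfl)

end Lintegral

section DaniellMeasure

variable {Ω : Type*} {L : Submodule ℝ (Ω → ℝ)}

/-- Daniell's continuity condition: `φ` tends to `0` along sequences decreasing pointwise to `0`. -/
def IsDaniell (φ : L →ₚ[ℝ] ℝ) : Prop :=
  ∀ F : ℕ → L, Antitone F → (∀ ω, Tendsto (fun n => (F n).1 ω) atTop (𝓝 0)) →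
    Tendsto (fun n => φ (F n)) atTop (𝓝 0)

variable {φ : L →ₚ[ℝ] ℝ}

variable [IsUnitalSublattice L]

theorem tendsto_posPart_sub_of_isUpperCover {F : ℕ → L} {f : L}
    (hF : IsUpperCover F fun ω => ENNReal.ofReal (f.1 ω)) (ω : Ω) :
    Tendsto (fun n => ((f - F n)⁺).1 ω) atTop (𝓝 0) := by
  have hpos n : ((f - F n)⁺).1 ω =
      (ENNReal.ofReal (f.1 ω) - ENNReal.ofReal ((F n).1 ω)).toReal := by
    rw [← ENNReal.ofReal_sub _ ((hF.nonneg n) ω), ENNReal.toReal_ofReal']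
    rfl
  have hlim : Tendsto (fun n => ENNReal.ofReal (f.1 ω) - ENNReal.ofReal ((F n).1 ω)) atTop
      (𝓝 0) := by
    rw [← tsub_eq_zero_of_le (hF.le_iSup ω)]
    exact ENNReal.Tendsto.sub tendsto_const_nhds
      (tendsto_atTop_iSup (monotone_ofReal_apply hF.mono ω)) (.inl ENNReal.ofReal_ne_top)
  simpa only [hpos, Function.comp_def, ENNReal.toReal_zero] using
    (ENNReal.tendsto_toReal ENNReal.zero_ne_top).comp hlim

theorem IsDaniell.ofReal_map_le_upperIntegral (hφ : IsDaniell φ) (f : L) :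
    ENNReal.ofReal (φ f) ≤ upperIntegral φ fun ω => ENNReal.ofReal (f.1 ω) := by
  refine le_iInf₂ fun F hF => ?_
  have hanti : Antitone fun n => (f - F n)⁺ := fun n k hnk =>
    posPart_mono (sub_le_sub_left (hF.mono hnk) f)
  have hlim := hφ _ hanti (tendsto_posPart_sub_of_isUpperCover hF)
  have hlim' := (ENNReal.tendsto_ofReal hlim).const_add (⨆ n, ENNReal.ofReal (φ (F n)))
  rw [ENNReal.ofReal_zero, add_zero] at hlim'
  refine ge_of_tendsto' hlim' fun n => ?_
  have hle : φ f ≤ φ (F n) + φ ((f - F n)⁺) := by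
    rw [← map_add]
    exact OrderHomClass.mono φ (sub_le_iff_le_add'.1 (le_posPart _))
  calc ENNReal.ofReal (φ f) ≤ ENNReal.ofReal (φ (F n) + φ ((f - F n)⁺)) :=
        ENNReal.ofReal_le_ofReal hle
    _ ≤ ENNReal.ofReal (φ (F n)) + ENNReal.ofReal (φ ((f - F n)⁺)) := ENNReal.ofReal_add_le
    _ ≤ _ := add_le_add_left (le_iSup (fun n => ENNReal.ofReal (φ (F n))) n) _

theorem iSup_ofReal_inf_nsmul_one (f : L) (ω : Ω) :
    ⨆ n : ℕ, ENNReal.ofReal ((f ⊓ n • 1).1 ω) = ENNReal.ofReal (f.1 ω) := by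
  refine le_antisymm (iSup_le fun n => ENNReal.ofReal_le_ofReal (min_le_left _ _)) ?_
  obtain ⟨n, hn⟩ := exists_nat_ge (f.1 ω)
  refine le_iSup_of_le n (ENNReal.ofReal_le_ofReal (le_min le_rfl ?_))
  simpa [IsUnitalSublattice.coe_one] using hn

variable [mΩ : MeasurableSpace Ω]

theorem toMeasure_upperOuterMeasure_univ_le (hm : mΩ ≤ (upperOuterMeasure φ).caratheodory) :
    (upperOuterMeasure φ).toMeasure hm univ ≤ ENNReal.ofReal (φ 1) := by
  rw [toMeasure_apply _ hm .univ, upperOuterMeasure_apply, indicator_univ]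
  refine (upperIntegral_mono φ fun ω => ?_).trans (upperIntegral_ofReal_le φ zero_le_one)
  rw [IsUnitalSublattice.coe_one, ENNReal.ofReal_one, Pi.one_apply]

theorem IsDaniell.lintegral_ofReal_le_of_le_nsmul_one (hφ : IsDaniell φ)
    (hm : mΩ ≤ (upperOuterMeasure φ).caratheodory) (hmeas : ∀ f ∈ L, Measurable f) {f : L}
    (hf : 0 ≤ f) {n : ℕ} (hfn : f ≤ n • 1) :
    ∫⁻ ω, ENNReal.ofReal (f.1 ω) ∂(upperOuterMeasure φ).toMeasure hm ≤
      ENNReal.ofReal (φ f) := by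
  set μ := (upperOuterMeasure φ).toMeasure hm
  have hcompl : 0 ≤ n • 1 - f := sub_nonneg.2 hfn
  have hadd ω : ENNReal.ofReal (f.1 ω) + ENNReal.ofReal ((n • 1 - f).1 ω) = n := by
    rw [← ENNReal.ofReal_add (hf ω) (hcompl ω)]
    simp [IsUnitalSublattice.coe_one]
  refine ENNReal.le_of_add_le_add_right (ENNReal.ofReal_ne_top (r := φ (n • 1 - f))) ?_
  calc ∫⁻ ω, ENNReal.ofReal (f.1 ω) ∂μ + ENNReal.ofReal (φ (n • 1 - f))
      ≤ ∫⁻ ω, ENNReal.ofReal (f.1 ω) ∂μ + ∫⁻ ω, ENNReal.ofReal ((n • 1 - f).1 ω) ∂μ := by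
        gcongr
        exact (hφ.ofReal_map_le_upperIntegral _).trans
          (upperIntegral_le_lintegral hm (hmeas _ (n • 1 - f).2).ennreal_ofReal)
    _ = n * μ univ := by
        rw [← lintegral_add_left (hmeas _ f.2).ennreal_ofReal]
        simp only [hadd, lintegral_const]
    _ ≤ n * ENNReal.ofReal (φ 1) := by
        gcongr
        exact toMeasure_upperOuterMeasure_univ_le hm
    _ = ENNReal.ofReal (φ (n • 1)) := by
        rw [map_nsmul, ENNReal.ofReal_nsmul, nsmul_eq_mul]
    _ = ENNReal.ofReal (φ f) + ENNReal.ofReal (φ (n • 1 - f)) := by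
        rw [← ENNReal.ofReal_add (φ.map_nonneg hf) (φ.map_nonneg hcompl), ← map_add,
          add_sub_cancel]

theorem IsDaniell.lintegral_ofReal_eq (hφ : IsDaniell φ)
    (hm : mΩ ≤ (upperOuterMeasure φ).caratheodory) (hmeas : ∀ f ∈ L, Measurable f) {f : L}
    (hf : 0 ≤ f) :
    ∫⁻ ω, ENNReal.ofReal (f.1 ω) ∂(upperOuterMeasure φ).toMeasure hm = ENNReal.ofReal (φ f) := by
  refine le_antisymm ?_ ((hφ.ofReal_map_le_upperIntegral f).trans
    (upperIntegral_le_lintegral hm (hmeas _ f.2).ennreal_ofReal))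
  have hmono : Monotone fun n : ℕ => f ⊓ n • 1 := fun n k hnk =>
    inf_le_inf_left f (nsmul_le_nsmul_left zero_le_one hnk)
  simp only [← iSup_ofReal_inf_nsmul_one f]
  rw [lintegral_iSup (fun n => (hmeas _ (f ⊓ n • 1).2).ennreal_ofReal)
    fun n k hnk ω => monotone_ofReal_apply hmono ω hnk]
  refine iSup_le fun n => (hφ.lintegral_ofReal_le_of_le_nsmul_one hm hmeas
    (le_inf hf (nsmul_nonneg zero_le_one n)) inf_le_right).trans ?_
  exact ENNReal.ofReal_le_ofReal (OrderHomClass.mono φ inf_le_left)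

theorem IsDaniell.integrable_and_integral_eq_of_nonneg (hφ : IsDaniell φ)
    (hm : mΩ ≤ (upperOuterMeasure φ).caratheodory) (hmeas : ∀ f ∈ L, Measurable f) {f : L}
    (hf : 0 ≤ f) :
    Integrable f.1 ((upperOuterMeasure φ).toMeasure hm) ∧
      ∫ ω, f.1 ω ∂(upperOuterMeasure φ).toMeasure hm = φ f := by
  have hlint := hφ.lintegral_ofReal_eq hm hmeas hf
  have hsm := (hmeas _ f.2).aestronglyMeasurable (μ := (upperOuterMeasure φ).toMeasure hm)
  have hae : 0 ≤ᵐ[(upperOuterMeasure φ).toMeasure hm] f.1 := .of_forall hf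
  refine ⟨(lintegral_ofReal_ne_top_iff_integrable hsm hae).1 (hlint ▸ ENNReal.ofReal_ne_top), ?_⟩
  rw [integral_eq_lintegral_of_nonneg_ae hae hsm, hlint, ENNReal.toReal_ofReal (φ.map_nonneg hf)]

theorem IsDaniell.integrable_and_integral_eq (hφ : IsDaniell φ)
    (hm : mΩ ≤ (upperOuterMeasure φ).caratheodory) (hmeas : ∀ f ∈ L, Measurable f) (f : L) :
    Integrable f.1 ((upperOuterMeasure φ).toMeasure hm) ∧
      ∫ ω, f.1 ω ∂(upperOuterMeasure φ).toMeasure hm = φ f := by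
  obtain ⟨hip, hep⟩ := hφ.integrable_and_integral_eq_of_nonneg hm hmeas (posPart_nonneg f)
  obtain ⟨hin, hen⟩ := hφ.integrable_and_integral_eq_of_nonneg hm hmeas (negPart_nonneg f)
  have hsub : f.1 = (f⁺).1 - (f⁻).1 := congrArg Subtype.val (posPart_sub_negPart f).symm
  refine ⟨hsub ▸ hip.sub hin, ?_⟩
  rw [hsub, integral_sub' hip hin, hep, hen, ← map_sub, posPart_sub_negPart]

theorem IsDaniell.exists_measure_integral_eq (hφ : IsDaniell φ)
    (hL : mΩ = ⨆ f ∈ L, MeasurableSpace.comap f Real.measurableSpace) :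
    ∃ μ : Measure Ω, IsFiniteMeasure μ ∧
      ∀ f : L, Integrable f.1 μ ∧ ∫ ω, f.1 ω ∂μ = φ f := by
  have hm : mΩ ≤ (upperOuterMeasure φ).caratheodory := hL ▸ iSup_comap_le_caratheodory φ
  exact ⟨(upperOuterMeasure φ).toMeasure hm,
    ⟨(toMeasure_upperOuterMeasure_univ_le hm).trans_lt ENNReal.ofReal_lt_top⟩,
    hφ.integrable_and_integral_eq hm fun f hf => measurable_of_eq_iSup_comap hL hf⟩

theorem IsDaniell.exists_measure_eq_mul_integral (hφ : IsDaniell φ)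
    (hL : mΩ = ⨆ f ∈ L, MeasurableSpace.comap f Real.measurableSpace) :
    ∃ μ : Measure Ω, IsFiniteMeasure μ ∧
      ∀ f : L, Integrable f.1 μ ∧ φ f = φ 1 * ∫ ω, f.1 ω ∂μ := by
  obtain ⟨μ, hμ, hrep⟩ := hφ.exists_measure_integral_eq hL
  refine ⟨ENNReal.ofReal (φ 1)⁻¹ • μ, μ.smul_finite ENNReal.ofReal_ne_top, fun f =>
    ⟨(hrep f).1.smul_measure ENNReal.ofReal_ne_top, ?_⟩⟩
  have hone : 0 ≤ φ 1 := φ.map_nonneg zero_le_one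
  rw [integral_smul_measure, ENNReal.toReal_ofReal (inv_nonneg.2 hone), (hrep f).2, smul_eq_mul]
  rcases eq_or_ne (φ 1) 0 with hzero | hne
  · have huniv : μ.real univ = φ 1 := by
      simpa [IsUnitalSublattice.coe_one] using (hrep 1).2
    have hμ0 : μ = 0 := Measure.measure_univ_eq_zero.1 <|
      (measureReal_eq_zero_iff).1 (huniv.trans hzero)
    rw [hzero, zero_mul, ← (hrep f).2, hμ0, integral_zero_measure]
  · rw [mul_inv_cancel_left₀ hne]

end DaniellMeasure

namespace FinAddMeasure

variable {Ω : Type*}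

theorem sum_inter_nonneg (m : FinAddMeasure Ω) {ι : Type*} (s : Finset ι) (a : ι → ℝ)
    (E : ι → Set Ω) (c : ℝ) (B : Set Ω)
    (h : ∀ ω ∈ B, 0 ≤ ∑ i ∈ s, a i * (E i).indicator (fun _ => (1 : ℝ)) ω + c) :
    0 ≤ ∑ i ∈ s, a i * m.μ (E i ∩ B) + c * m.μ B := by
  classical
  induction s using Finset.induction_on generalizing c B with
  | empty =>
    rcases B.eq_empty_or_nonempty with rfl | ⟨ω, hω⟩
    · simp [m.empty]
    · simpa using mul_nonneg (by simpa using h ω hω) (m.nonneg B)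
  | insert j s hj ih =>
    -- Splitting `B` along `E j` absorbs the coefficient `a j` into the constant `c`.
    have hsplit (F : Set Ω) : m.μ (F ∩ B) = m.μ (F ∩ (B ∩ E j)) + m.μ (F ∩ (B \ E j)) := by
      rw [← m.add _ _ (disjoint_sdiff_right.mono
        (inter_subset_right.trans inter_subset_right) inter_subset_right),
        ← inter_union_distrib_left, inter_union_sdiff]
    have h_in := ih (c + a j) (B ∩ E j) fun ω hω => by
      have := h ω hω.1
      rw [Finset.sum_insert hj, indicator_of_mem hω.2] at this
      linarith
    have h_out := ih c (B \ E j) fun ω hω => by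
      have := h ω hω.1
      rw [Finset.sum_insert hj, indicator_of_notMem hω.2] at this
      linarith
    have hB := hsplit univ
    simp only [univ_inter] at hB
    rw [Finset.sum_insert hj, hB, Finset.sum_congr rfl fun i _ => by rw [hsplit (E i)],
      inter_comm (E j) B]
    simp only [mul_add, Finset.sum_add_distrib]
    linarith

theorem sum_le_sum_of_indicator_le (m : FinAddMeasure Ω) {ι κ : Type*} {s : Finset ι}
    {t : Finset κ} {a : ι → ℝ} {E : ι → Set Ω} {b : κ → ℝ} {F : κ → Set Ω}
    (h : ∀ ω, ∑ i ∈ s, a i * (E i).indicator (fun _ => (1 : ℝ)) ω ≤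
      ∑ j ∈ t, b j * (F j).indicator (fun _ => (1 : ℝ)) ω) :
    ∑ i ∈ s, a i * m.μ (E i) ≤ ∑ j ∈ t, b j * m.μ (F j) := by
  have hdiff := m.sum_inter_nonneg (s.disjSum t) (Sum.elim (fun i => -a i) b) (Sum.elim E F) 0 univ
    fun ω _ => by
      simpa only [Finset.sum_disjSum, Sum.elim_inl, Sum.elim_inr, neg_mul,
        Finset.sum_neg_distrib, add_zero, le_neg_add_iff_add_le] using h ω
  simpa only [Finset.sum_disjSum, Sum.elim_inl, Sum.elim_inr, neg_mul, Finset.sum_neg_distrib,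
    inter_univ, zero_mul, add_zero, le_neg_add_iff_add_le] using hdiff

/-- `m` extends the measure `μ`, given on a σ-algebra, to all subsets of `Ω`. -/
def Extends [MeasurableSpace Ω] (m : FinAddMeasure Ω) (μ : Measure Ω) : Prop :=
  ∀ E, MeasurableSet E → μ E = ENNReal.ofReal (m.μ E)

end FinAddMeasure

section LowerSums

variable {Ω : Type*}

theorem sum_mem_lowerSums {ι : Type*} {μ : Set Ω → ℝ} {f : Ω → ℝ} (s : Finset ι)
    (a : ι → ℝ≥0) (E : ι → Set Ω)
    (h : ∀ ω, ∑ i ∈ s, a i * (E i).indicator (fun _ => (1 : ℝ)) ω ≤ f ω) :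
    ∑ i ∈ s, a i * μ (E i) ∈ lowerSums univ μ f := by
  have hreindex (x : ι → ℝ) : ∑ k, x (s.equivFin.symm k) = ∑ i ∈ s, x i := by
    rw [Equiv.sum_comp s.equivFin.symm (fun i : s => x i), Finset.sum_coe_sort]
  refine ⟨s.card, fun k => a (s.equivFin.symm k), fun k => E (s.equivFin.symm k),
    fun k => (a _).coe_nonneg, fun _ => mem_univ _, fun ω => ?_, ?_⟩
  · exact (hreindex fun i => a i * (E i).indicator (fun _ => (1 : ℝ)) ω).trans_le (h ω)
  · exact (hreindex fun i => a i * μ (E i)).symm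

theorem nonneg_of_mem_lowerSums {A : Set (Set Ω)} {μ : Set Ω → ℝ} (hμ : ∀ E, 0 ≤ μ E)
    {f : Ω → ℝ} {r : ℝ} (hr : r ∈ lowerSums A μ f) : 0 ≤ r := by
  obtain ⟨n, a, E, ha, -, -, rfl⟩ := hr
  exact Finset.sum_nonneg fun i _ => mul_nonneg (ha i) (hμ _)

theorem finite_range_sum_mul_indicator {ι R : Type*} [Finite ι] [NonAssocSemiring R] (s : Finset ι)
    (a : ι → R) (E : ι → Set Ω) :
    (range fun ω => ∑ i ∈ s, a i * (E i).indicator (fun _ => (1 : R)) ω).Finite := by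
  classical
  refine (finite_range fun p : ι → Prop => ∑ i ∈ s, if p i then a i else 0).subset ?_
  rintro _ ⟨ω, rfl⟩
  exact ⟨fun i => ω ∈ E i, Finset.sum_congr rfl fun i _ => by simp [indicator_apply]⟩

variable [MeasurableSpace Ω]

theorem exists_simpleFunc_between {α : Type*} [LinearOrder α] [OrderBot α] [TopologicalSpace α]
    [OrderTopology α] [SecondCountableTopology α] [MeasurableSpace α] [BorelSpace α]
    {s g : Ω → α} (hs : (range s).Finite) (hg : Measurable g) (hsg : s ≤ g) :
    ∃ t : SimpleFunc Ω α, s ≤ t ∧ ⇑t ≤ g := by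
  let round (x : α) : α := (hs.toFinset.filter (· ≤ x)).sup id
  have hround : Monotone round := fun x y hxy =>
    Finset.sup_mono (Finset.monotone_filter_right _ fun _ _ hv => le_trans hv hxy)
  have hfin : (range (round ∘ g)).Finite := by
    refine (hs.toFinset.powerset.image (·.sup id)).finite_toSet.subset ?_
    rintro _ ⟨ω, rfl⟩
    exact Finset.mem_image_of_mem _ (Finset.mem_powerset.2 (Finset.filter_subset _ _))
  refine ⟨⟨round ∘ g, fun x => hround.measurable.comp hg (measurableSet_singleton x), hfin⟩,
    fun ω => ?_, fun ω => Finset.sup_le fun v hv => (Finset.mem_filter.1 hv).2⟩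
  exact Finset.le_sup (f := id)
    (Finset.mem_filter.2 ⟨hs.mem_toFinset.2 (mem_range_self ω), hsg ω⟩)

theorem sum_range_mul_indicator_preimage (t : SimpleFunc Ω ℝ≥0) (ω : Ω) :
    ∑ v ∈ t.range, (v : ℝ) * (t ⁻¹' {v}).indicator (fun _ => (1 : ℝ)) ω = t ω := by
  rw [Finset.sum_eq_single_of_mem (t ω) (t.mem_range_self ω)]
  · simp
  · intro v _ hv
    rw [indicator_of_notMem (by simpa using hv.symm), mul_zero]

namespace FinAddMeasure.Extends

variable {m : FinAddMeasure Ω} {μ : Measure Ω}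

theorem ofReal_sum_range (h : m.Extends μ) (t : SimpleFunc Ω ℝ≥0) :
    ENNReal.ofReal (∑ v ∈ t.range, v * m.μ (t ⁻¹' {v})) = ∫⁻ ω, t ω ∂μ := by
  have hlint : ∫⁻ ω, t ω ∂μ = (t.map ((↑) : ℝ≥0 → ℝ≥0∞)).lintegral μ :=
    SimpleFunc.lintegral_eq_lintegral (t.map ENNReal.ofNNReal) μ
  rw [hlint, SimpleFunc.map_lintegral,
    ENNReal.ofReal_sum_of_nonneg fun v _ => mul_nonneg v.2 (m.nonneg _)]
  refine Finset.sum_congr rfl fun v _ => ?_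
  rw [ENNReal.ofReal_mul v.coe_nonneg, h _ (t.measurableSet_fiber v), ENNReal.ofReal_coe_nnreal]

theorem ofReal_le_lintegral_of_mem_lowerSums (h : m.Extends μ) {g : Ω → ℝ≥0} (hg : Measurable g)
    {r : ℝ} (hr : r ∈ lowerSums univ m.μ fun ω => g ω) :
    ENNReal.ofReal r ≤ ∫⁻ ω, g ω ∂μ := by
  obtain ⟨n, a, E, ha, -, hle, rfl⟩ := hr
  lift a to Fin n → ℝ≥0 using ha
  have hcoe ω : (∑ i, (a i : ℝ) * (E i).indicator (fun _ => (1 : ℝ)) ω) =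
      (∑ i, a i * (E i).indicator (fun _ => (1 : ℝ≥0)) ω : ℝ≥0) := by
    simp
  simp only [hcoe, NNReal.coe_le_coe] at hle
  obtain ⟨t, hst, htg⟩ := exists_simpleFunc_between
    (finite_range_sum_mul_indicator Finset.univ a E) hg hle
  calc ENNReal.ofReal (∑ i, a i * m.μ (E i))
      ≤ ENNReal.ofReal (∑ v ∈ t.range, v * m.μ (t ⁻¹' {v})) := by
        refine ENNReal.ofReal_le_ofReal (m.sum_le_sum_of_indicator_le fun ω => ?_)
        rw [sum_range_mul_indicator_preimage, hcoe]
        exact NNReal.coe_le_coe.2 (hst ω)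
    _ = ∫⁻ ω, t ω ∂μ := h.ofReal_sum_range t
    _ ≤ ∫⁻ ω, g ω ∂μ := lintegral_mono fun ω => ENNReal.coe_le_coe.2 (htg ω)

theorem isLUB_lowerSums (h : m.Extends μ) {g : Ω → ℝ≥0} (hg : Measurable g) :
    IsLUB (ENNReal.ofReal '' lowerSums univ m.μ fun ω => g ω) (∫⁻ ω, g ω ∂μ) := by
  refine ⟨?_, fun C hC => ?_⟩
  · rintro _ ⟨r, hr, rfl⟩
    exact h.ofReal_le_lintegral_of_mem_lowerSums hg hr
  · rw [lintegral_eq_nnreal]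
    refine iSup₂_le fun t ht => ?_
    rw [← SimpleFunc.lintegral_eq_lintegral]
    refine (h.ofReal_sum_range t).symm.trans_le (hC (mem_image_of_mem _ ?_))
    refine sum_mem_lowerSums _ _ _ fun ω => ?_
    rw [sum_range_mul_indicator_preimage]
    exact_mod_cast ht ω

theorem bddAbove_lowerSums_iff (h : m.Extends μ) {g : Ω → ℝ≥0} (hg : Measurable g) :
    BddAbove (lowerSums univ m.μ fun ω => g ω) ↔ ∫⁻ ω, g ω ∂μ ≠ ∞ := by
  constructor
  · rintro ⟨C, hC⟩
    refine ne_top_of_le_ne_top (ENNReal.ofReal_ne_top (r := C)) ((h.isLUB_lowerSums hg).2 ?_)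
    rintro _ ⟨r, hr, rfl⟩
    exact ENNReal.ofReal_le_ofReal (hC hr)
  · exact fun hfin => ⟨_, fun r hr => (ENNReal.ofReal_le_iff_le_toReal hfin).1
      (h.ofReal_le_lintegral_of_mem_lowerSums hg hr)⟩

theorem sSup_lowerSums (h : m.Extends μ) {g : Ω → ℝ≥0} (hg : Measurable g) :
    sSup (lowerSums univ m.μ fun ω => g ω) = (∫⁻ ω, g ω ∂μ).toReal := by
  rw [← (h.isLUB_lowerSums hg).sSup_eq, ENNReal.toReal_sSup, image_image]
  · rw [image_congr fun r hr => ENNReal.toReal_ofReal (nonneg_of_mem_lowerSums m.nonneg hr),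
      image_id']
  · rintro _ ⟨r, -, rfl⟩
    exact ENNReal.ofReal_ne_top

theorem faIntegrable_iff_integrable (h : m.Extends μ) {f : Ω → ℝ} (hf : Measurable f) :
    FAIntegrable m f ↔ Integrable f μ := by
  have henorm ω : ‖f ω‖ₑ = ENNReal.ofReal (f ω) + ENNReal.ofReal (-f ω) := by
    rw [Real.enorm_eq_ofReal_abs]
    rcases le_total (f ω) 0 with hω | hω <;>
      simp [hω, abs_of_nonpos, abs_of_nonneg, ENNReal.ofReal_of_nonpos]
  simp only [FAIntegrable, FAIntegrableOn, ← Real.coe_toNNReal']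
  rw [h.bddAbove_lowerSums_iff (by fun_prop), h.bddAbove_lowerSums_iff (by fun_prop),
    ← ENNReal.add_ne_top, ← lintegral_add_left (by fun_prop)]
  simp only [Integrable, hf.aestronglyMeasurable, true_and, hasFiniteIntegral_iff_enorm, henorm,
    lt_top_iff_ne_top, ENNReal.ofReal]

theorem faInt_eq_integral (h : m.Extends μ) {f : Ω → ℝ} (hf : Measurable f)
    (hfi : Integrable f μ) : faInt m f = ∫ ω, f ω ∂μ := by
  simp only [faInt, faIntOn, ← Real.coe_toNNReal']
  rw [h.sSup_lowerSums (by fun_prop), h.sSup_lowerSums (by fun_prop),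
    integral_eq_lintegral_pos_part_sub_lintegral_neg_part hfi]
  rfl

theorem isFiniteMeasure (h : m.Extends μ) : IsFiniteMeasure μ :=
  ⟨(h univ .univ).trans_lt ENNReal.ofReal_lt_top⟩

theorem hasSum_iUnion (h : m.Extends μ) {E : ℕ → Set Ω}
    (hE : ∀ n, MeasurableSet (E n)) (hd : Pairwise (Function.onFun Disjoint E)) :
    HasSum (fun n => m.μ (E n)) (m.μ (⋃ n, E n)) := by
  have := h.isFiniteMeasure
  have hsigned F (hF : MeasurableSet F) : m.μ F = μ.toSignedMeasure F := by
    rw [Measure.toSignedMeasure_apply_measurable hF, Measure.real, h F hF,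
      ENNReal.toReal_ofReal (m.nonneg F)]
  simp only [hsigned _ (hE _), hsigned _ (.iUnion hE)]
  exact VectorMeasure.hasSum_of_disjoint_iUnion hE hd

end FinAddMeasure.Extends

theorem FinAddMeasure.exists_extends_of_hasSum (m : FinAddMeasure Ω)
    (hm : ∀ E : ℕ → Set Ω, (∀ n, MeasurableSet (E n)) → Pairwise (Function.onFun Disjoint E) →
      HasSum (fun n => m.μ (E n)) (m.μ (⋃ n, E n))) :
    ∃ μ : Measure Ω, m.Extends μ := by
  refine ⟨Measure.ofMeasurable (fun E _ => ENNReal.ofReal (m.μ E)) (by simp [m.empty])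
    fun E hE hd => ?_, fun E hE => Measure.ofMeasurable_apply E hE⟩
  have hs := hm E hE hd
  rw [← hs.tsum_eq, ENNReal.ofReal_tsum_of_nonneg (fun n => m.nonneg _) hs.summable]

end LowerSums

section Extension

open scoped BoundedContinuousFunction

variable {Ω : Type*} [MeasurableSpace Ω]

section Integral

variable [TopologicalSpace Ω] (μ : Measure Ω) [IsFiniteMeasure μ]

theorem integrable_boundedContinuousFunction {f : Ω →ᵇ ℝ} (hf : Measurable f) :
    Integrable f μ :=
  .of_bound hf.aestronglyMeasurable ‖f‖ (.of_forall f.norm_coe_le_norm)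

/-- Integration, as a linear functional on the bounded continuous functions that are measurable. -/
noncomputable def measurableIntegral : (Ω →ᵇ ℝ) →ₗ.[ℝ] ℝ where
  domain :=
    { carrier := {f | Measurable f}
      zero_mem' := measurable_const
      add_mem' := fun hf hg => hf.add hg
      smul_mem' := fun c _ hf => hf.const_smul c }
  toFun :=
    { toFun := fun f => ∫ ω, f.1 ω ∂μ
      map_add' := fun f g => integral_add (integrable_boundedContinuousFunction μ f.2)
        (integrable_boundedContinuousFunction μ g.2)
      map_smul' := fun c _ => integral_const_mul c _ }

theorem exists_nonneg_extension_integral :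
    ∃ Λ : (Ω →ᵇ ℝ) →ₗ[ℝ] ℝ, (∀ f, 0 ≤ f → 0 ≤ Λ f) ∧
      ∀ f : Ω →ᵇ ℝ, Measurable f → Λ f = ∫ ω, f ω ∂μ := by
  have : PosSMulMono ℝ (Ω →ᵇ ℝ) := ⟨fun c hc _ _ hfg ω => mul_le_mul_of_nonneg_left (hfg ω) hc⟩
  obtain ⟨Λ, hΛ, hpos⟩ := riesz_extension (PointedCone.positive ℝ (Ω →ᵇ ℝ)) (measurableIntegral μ)
    (fun f hf => integral_nonneg hf) fun f =>
      ⟨⟨.const Ω ‖f‖, measurable_const⟩, fun ω =>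
        neg_le_iff_add_nonneg.1 (neg_le.1 (f.neg_norm_le_apply ω))⟩
  exact ⟨Λ, hpos, fun f hf => hΛ ⟨f, hf⟩⟩

end Integral

theorem exists_finAddMeasure_extends (μ : Measure Ω) [IsFiniteMeasure μ] :
    ∃ m : FinAddMeasure Ω, m.Extends μ := by
  let _ : TopologicalSpace Ω := ⊥
  have : DiscreteTopology Ω := ⟨rfl⟩
  obtain ⟨Λ, hpos, hΛ⟩ := exists_nonneg_extension_integral μ
  let χ (E : Set Ω) : Ω →ᵇ ℝ := .indicator E (isClopen_discrete E)
  refine ⟨⟨fun E => Λ (χ E), fun E => hpos _ fun ω => indicator_nonneg (fun _ _ => zero_le_one) ω,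
    ?_, fun E F hEF => ?_⟩, fun E hE => ?_⟩
  · rw [show χ ∅ = 0 from DFunLike.coe_injective (indicator_empty _), map_zero]
  · rw [← map_add]
    congr 1
    ext ω
    exact congrFun (indicator_union_of_disjoint hEF _) ω
  · change μ E = ENNReal.ofReal (Λ (χ E))
    rw [hΛ _ (measurable_const.indicator hE)]
    exact (ofReal_measureReal (μ := μ)).symm.trans
      (congrArg ENNReal.ofReal (integral_indicator_one hE).symm)

end Extension

section Representation

variable {Ω : Type*} [mΩ : MeasurableSpace Ω] {L : Submodule ℝ (Ω → ℝ)} {φ : L →ₚ[ℝ] ℝ}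

theorem isDaniell_of_eq_mul_integral {μ : Measure Ω} {c : ℝ}
    (h : ∀ f : L, Integrable f.1 μ ∧ φ f = c * ∫ ω, f.1 ω ∂μ) : IsDaniell φ := by
  intro F hF hlim
  have hbound n : ∀ᵐ ω ∂μ, ‖(F n).1 ω‖ ≤ (F 0).1 ω := .of_forall fun ω => by
    have hanti : Antitone fun n => (F n).1 ω := fun _ _ hnk => hF hnk ω
    rw [Real.norm_of_nonneg (hanti.le_of_tendsto (hlim ω) n)]
    exact hanti n.zero_le
  have hint : Tendsto (fun n => ∫ ω, (F n).1 ω ∂μ) atTop (𝓝 (∫ _, 0 ∂μ)) :=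
    tendsto_integral_of_dominated_convergence _ (fun n => (h (F n)).1.aestronglyMeasurable)
      (h (F 0)).1 hbound (.of_forall hlim)
  simpa only [(h _).2, integral_zero, mul_zero] using hint.const_mul c

theorem isDaniell_iff_exists_finAddMeasure [IsUnitalSublattice L]
    (hL : mΩ = ⨆ f ∈ L, MeasurableSpace.comap f Real.measurableSpace) :
    IsDaniell φ ↔ ∃ m : FinAddMeasure Ω,
      (∀ f : L, FAIntegrable m f.1) ∧ (∀ f : L, φ f = φ 1 * faInt m f.1) ∧
      ∀ E : ℕ → Set Ω, (∀ n, MeasurableSet (E n)) → Pairwise (Function.onFun Disjoint E) →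
        HasSum (fun n => m.μ (E n)) (m.μ (⋃ n, E n)) := by
  have hmeas (f : L) : Measurable f.1 := measurable_of_eq_iSup_comap hL f.2
  constructor
  · intro hφ
    obtain ⟨μ, _, hrep⟩ := hφ.exists_measure_eq_mul_integral hL
    obtain ⟨m, hm⟩ := exists_finAddMeasure_extends μ
    refine ⟨m, fun f => (hm.faIntegrable_iff_integrable (hmeas f)).2 (hrep f).1, fun f => ?_,
      fun E => hm.hasSum_iUnion⟩
    rw [hm.faInt_eq_integral (hmeas f) (hrep f).1]
    exact (hrep f).2
  · rintro ⟨m, hintegrable, hrep, hsum⟩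
    obtain ⟨μ, hm⟩ := m.exists_extends_of_hasSum hsum
    refine isDaniell_of_eq_mul_integral (μ := μ) (c := φ 1) fun f => ?_
    have hfi := (hm.faIntegrable_iff_integrable (hmeas f)).1 (hintegrable f)
    exact ⟨hfi, hm.faInt_eq_integral (hmeas f) hfi ▸ hrep f⟩

end Representation

/-- Daniell: for a positive linear functional `φ` on a vector
sublattice `L ⊆ ℝ^Ω` with `1 ∈ L`, `φ(f_n) → 0` along every sequence in `L`
decreasing pointwise to `0` iff `φ` admits a representing measure
(`L ⊆ L(m)`, `φ(f) = φ(1)·m(f)`) whose restriction to the σ-algebra generated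
by `L` is countably additive. -/
theorem daniell_representation {Ω : Type*} [Nonempty Ω]
    (L : Set (Ω → ℝ))
    (hLadd : ∀ f ∈ L, ∀ g ∈ L, f + g ∈ L)
    (hLsmul : ∀ (c : ℝ), ∀ f ∈ L, c • f ∈ L)
    (hLsup : ∀ f ∈ L, ∀ g ∈ L, (fun ω => max (f ω) (g ω)) ∈ L)
    (h1 : (fun _ => (1 : ℝ)) ∈ L)
    (φ : (Ω → ℝ) → ℝ)
    (hφadd : ∀ f ∈ L, ∀ g ∈ L, φ (f + g) = φ f + φ g)
    (hφsmul : ∀ (c : ℝ), ∀ f ∈ L, φ (c • f) = c * φ f)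
    (hφpos : ∀ f ∈ L, (∀ ω, 0 ≤ f ω) → 0 ≤ φ f) :
    (∀ fs : ℕ → Ω → ℝ, (∀ n, fs n ∈ L) →
        (∀ n ω, fs (n + 1) ω ≤ fs n ω) →
        (∀ ω, Filter.Tendsto (fun n => fs n ω) Filter.atTop (nhds 0)) →
        Filter.Tendsto (fun n => φ (fs n)) Filter.atTop (nhds 0)) ↔
    (∃ m : FinAddMeasure Ω,
      (∀ f ∈ L, FAIntegrable m f) ∧
      (∀ f ∈ L, φ f = φ (fun _ => (1 : ℝ)) * faInt m f) ∧
      (∀ E : ℕ → Set Ω,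
        (∀ n, @MeasurableSet Ω (⨆ f ∈ L, MeasurableSpace.comap f Real.measurableSpace) (E n)) →
        Pairwise (Function.onFun Disjoint E) →
        HasSum (fun n => m.μ (E n)) (m.μ (⋃ n, E n)))) := by
  let S : Submodule ℝ (Ω → ℝ) :=
    { carrier := L
      add_mem' := fun hf hg => hLadd _ hf _ hg
      zero_mem' := by simpa using hLsmul 0 _ h1
      smul_mem' := fun c _ hf => hLsmul c _ hf }
  let Φ : S →ₚ[ℝ] ℝ := .mk₀
    { toFun := fun f => φ f
      map_add' := fun f g => hφadd _ f.2 _ g.2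
      map_smul' := fun c f => hφsmul c _ f.2 } fun f hf => hφpos _ f.2 hf
  have hS : IsUnitalSublattice S := ⟨fun f hf g hg => hLsup f hf g hg, h1⟩
  let _ : MeasurableSpace Ω := ⨆ f ∈ L, MeasurableSpace.comap f Real.measurableSpace
  have hdaniell := isDaniell_iff_exists_finAddMeasure (φ := Φ) rfl
  simp only [SetLike.forall] at hdaniell
  refine Iff.trans ⟨fun h F hF hlim => ?_, fun h fs hfs hanti hlim => ?_⟩ hdaniell
  · exact h (fun n => F n) (fun n => (F n).2) (fun n ω => hF n.le_succ ω) hlim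
  · exact h (fun n => ⟨fs n, hfs n⟩) (antitone_nat_of_succ_le fun n ω => hanti n ω) hlim
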